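/- Let A be a commutative weakly amenable complex Banach algebra and let I be a closed ideal of A, regarded as a Banach algebra in its own right. Then the following are equivalent: (a) I is weakly amenable; (b) I is cyclically weakly amenable; (c) I is essential. -/

import Mathlib

/-- `D : A →L[ℂ] A →L[ℂ] ℂ` (viewed as a continuous linear map `A → A*`) is a
derivation: `D(ab) = D(a)·b + a·D(b)`, where `⟨F·a, x⟩ = ⟨F, ax⟩` and
`⟨a·F, x⟩ = ⟨F, xa⟩`. -/
def IsDerivation {A : Type*} [NonUnitalNormedRing A] [NormedSpace ℂ A]
    (D : A →L[ℂ] A →L[ℂ] ℂ) : Prop :=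
  ∀ a b x : A, D (a * b) x = D a (b * x) + D b (x * a)

/-- `D` is inner: `D = ad_F` for some `F ∈ A*`, i.e. `⟨D(a), b⟩ = F(ab) - F(ba)`. -/
def IsInnerDerivation {A : Type*} [NonUnitalNormedRing A] [NormedSpace ℂ A]
    (D : A →L[ℂ] A →L[ℂ] ℂ) : Prop :=
  ∃ F : A →L[ℂ] ℂ, ∀ a b : A, D a b = F (a * b) - F (b * a)

/-- `D` is cyclic: `⟨D(a), b⟩ + ⟨D(b), a⟩ = 0`. -/
def IsCyclicDerivation {A : Type*} [NonUnitalNormedRing A] [NormedSpace ℂ A]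
    (D : A →L[ℂ] A →L[ℂ] ℂ) : Prop :=
  ∀ a b : A, D a b + D b a = 0

/-- `A` is weakly amenable: every continuous derivation `A → A*` is inner. -/
def WeaklyAmenable (A : Type*) [NonUnitalNormedRing A] [NormedSpace ℂ A] : Prop :=
  ∀ D : A →L[ℂ] A →L[ℂ] ℂ, IsDerivation D → IsInnerDerivation D

/-- `A` is cyclically amenable: every continuous cyclic derivation `A → A*` is inner. -/
def CyclicallyAmenable (A : Type*) [NonUnitalNormedRing A] [NormedSpace ℂ A] : Prop :=
  ∀ D : A →L[ℂ] A →L[ℂ] ℂ, IsDerivation D → IsCyclicDerivation D → IsInnerDerivation D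

/-- `A` is cyclically weakly amenable: every continuous derivation `A → A*` is cyclic. -/
def CyclicallyWeaklyAmenable (A : Type*) [NonUnitalNormedRing A] [NormedSpace ℂ A] : Prop :=
  ∀ D : A →L[ℂ] A →L[ℂ] ℂ, IsDerivation D → IsCyclicDerivation D

/-- `A` is essential: the linear span of products is dense in `A`. -/
def Essential (A : Type*) [NonUnitalNormedRing A] [NormedSpace ℂ A] : Prop :=
  Dense ((Submodule.span ℂ {x : A | ∃ a b : A, a * b = x} : Submodule ℂ A) : Set A)

/-- `φ` is a character of `A`, i.e. `φ ∈ Δ(A)`: a nonzero multiplicative linear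
functional (characters on Banach algebras are automatically continuous). -/
def IsCharacter {A : Type*} [NonUnitalNormedRing A] [NormedSpace ℂ A]
    (φ : A →L[ℂ] ℂ) : Prop :=
  φ ≠ 0 ∧ ∀ a b : A, φ (a * b) = φ a * φ b

/-- `d ∈ A*` is a continuous point derivation at `φ`. -/
def IsPointDerivation {A : Type*} [NonUnitalNormedRing A] [NormedSpace ℂ A]
    (φ d : A →L[ℂ] ℂ) : Prop :=
  ∀ a b : A, d (a * b) = d a * φ b + φ a * d b

/-- `A` is point amenable: every continuous point derivation at some `φ ∈ Δ(A)` is zero. -/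
def PointAmenable (A : Type*) [NonUnitalNormedRing A] [NormedSpace ℂ A] : Prop :=
  ∀ φ d : A →L[ℂ] ℂ, IsCharacter φ → IsPointDerivation φ d → d = 0

/-- `A` is 0-point amenable: every continuous point derivation at some
`φ ∈ Δ₀(A) = Δ(A) ∪ {0}` is zero. -/
def ZeroPointAmenable (A : Type*) [NonUnitalNormedRing A] [NormedSpace ℂ A] : Prop :=
  ∀ φ d : A →L[ℂ] ℂ, (IsCharacter φ ∨ φ = 0) → IsPointDerivation φ d → d = 0

/-- A non-unital subalgebra with the restricted norm and scalar action (the instance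
`SubmoduleClass.toNormedSpace`, which instance search no longer finds here). -/
instance nonUnitalSubalgebraNormedSpace {A : Type*} [NonUnitalNormedRing A] [NormedSpace ℂ A]
    (I : NonUnitalSubalgebra ℂ A) : NormedSpace ℂ I where
  norm_smul_le c x := norm_smul_le c (x : A)

/-!
If `f` is a functional vanishing on products, then `f ⊗ f` is a derivation, and it is cyclic only
if `f = 0`; by Hahn–Banach, cyclic weak amenability therefore forces essentiality.

Conversely, let `D : I → I*` be a derivation. For `a ∈ A` and `x ∈ I` the functional
`φ(a, x) = D(ax) - D(x)·a` on `I` plays the role of `D(a)·x`. It satisfies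
`φ(ab, x) = φ(a, bx) + φ(b, x)·a` and `φ(a, xv) = φ(a, x)·v`, and together these make
`(a, b) ↦ ⟨φ(a, x), bvw⟩` a derivation `A → A*`, which vanishes because `A` is commutative and
weakly amenable. For `a, b ∈ I` this says `⟨D(a), xbvw⟩ = 0`, so `D(a)` is zero on `I⁴`, which
spans a dense subspace when `I` is essential.
-/

theorem dense_of_forall_dual_eq_zero {𝕜 E : Type*} [RCLike 𝕜] [NormedAddCommGroup E]
    [NormedSpace 𝕜 E] {p : Submodule 𝕜 E}
    (h : ∀ f : StrongDual 𝕜 E, (∀ x ∈ p, f x = 0) → f = 0) : Dense (p : Set E) := by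
  rw [Submodule.dense_iff_topologicalClosure_eq_top, Submodule.eq_top_iff']
  intro x
  have hclosed : IsClosed (p.topologicalClosure : Set E) := p.isClosed_topologicalClosure
  rw [← Submodule.Quotient.mk_eq_zero]
  refine SeparatingDual.eq_zero_of_forall_dual_eq_zero (R := 𝕜) fun g => ?_
  have hg : g.comp p.topologicalClosure.mkQL = 0 := h _ fun y hy => by
    have hy_quot : p.topologicalClosure.mkQL y = 0 :=
      (Submodule.Quotient.mk_eq_zero _).2 (p.le_topologicalClosure hy)
    rw [ContinuousLinearMap.comp_apply, hy_quot, map_zero]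
  exact DFunLike.congr_fun hg x

section NormedAlgebra

variable {B : Type*} [NonUnitalNormedRing B] [NormedSpace ℂ B]

theorem Essential.eq_zero {E : Type*} [AddCommMonoid E] [TopologicalSpace E] [T2Space E]
    [Module ℂ E] (h : Essential B) {f : B →L[ℂ] E} (hf : ∀ a b, f (a * b) = 0) : f = 0 :=
  ContinuousLinearMap.ext_on h <| by
    rintro _ ⟨a, b, rfl⟩
    exact hf a b

theorem Essential.bilin_eq_zero {E : Type*} [NormedAddCommGroup E] [NormedSpace ℂ E]
    (h : Essential B) {β : B →L[ℂ] B →L[ℂ] E} (hβ : ∀ a b c d, β (a * b) (c * d) = 0) : β = 0 :=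
  h.eq_zero fun a b => h.eq_zero (hβ a b)

theorem IsInnerDerivation.isCyclicDerivation {D : B →L[ℂ] B →L[ℂ] ℂ} (h : IsInnerDerivation D) :
    IsCyclicDerivation D := by
  obtain ⟨F, hF⟩ := h
  intro a b
  rw [hF, hF]
  ring

theorem WeaklyAmenable.cyclicallyWeaklyAmenable (h : WeaklyAmenable B) :
    CyclicallyWeaklyAmenable B :=
  fun D hD => (h D hD).isCyclicDerivation

theorem isDerivation_smulRight_self {f : B →L[ℂ] ℂ} (hf : ∀ a b, f (a * b) = 0) :
    IsDerivation (f.smulRight f) := fun a b x => by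
  simp only [ContinuousLinearMap.smulRight_apply, smul_apply, hf, zero_smul, smul_zero,
    zero_apply, add_zero]

theorem CyclicallyWeaklyAmenable.essential (h : CyclicallyWeaklyAmenable B) : Essential B := by
  refine dense_of_forall_dual_eq_zero fun f hf => ?_
  have hf_mul : ∀ a b, f (a * b) = 0 := fun a b => hf _ (Submodule.subset_span ⟨a, b, rfl⟩)
  ext a
  have hcyclic : f a * f a + f a * f a = 0 := h _ (isDerivation_smulRight_self hf_mul) a a
  exact mul_self_eq_zero.1 (add_self_eq_zero.1 hcyclic)

end NormedAlgebra

theorem WeaklyAmenable.derivation_eq_zero {A : Type*} [NonUnitalNormedCommRing A]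
    [NormedSpace ℂ A] (h : WeaklyAmenable A) {D : A →L[ℂ] A →L[ℂ] ℂ} (hD : IsDerivation D) :
    D = 0 := by
  obtain ⟨F, hF⟩ := h D hD
  ext a b
  rw [hF, mul_comm, sub_self, zero_apply, zero_apply]

section Ideal

variable {A : Type*} [NonUnitalNormedCommRing A] [NormedSpace ℂ A]
  [IsScalarTower ℂ A A] [SMulCommClass ℂ A A] {I : NonUnitalSubalgebra ℂ A}
  (hI : ∀ a : A, ∀ x ∈ I, a * x ∈ I)

/-- The action of `A` on an ideal `I` by multiplication, as a continuous bilinear map. -/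
noncomputable def idealMul : A →L[ℂ] I →L[ℂ] I :=
  LinearMap.mkContinuous₂
    (LinearMap.mk₂ ℂ (fun a x => (⟨a * x, hI a x x.2⟩ : I))
      (fun a b x => Subtype.ext (add_mul a b (x : A)))
      (fun c a x => Subtype.ext (smul_mul_assoc c a (x : A)))
      (fun a x y => Subtype.ext (mul_add a (x : A) y))
      (fun c a x => Subtype.ext (mul_smul_comm c a (x : A))))
    1 fun a x => (norm_mul_le a (x : A)).trans_eq (by rw [one_mul]; rfl)

theorem coe_idealMul (a : A) (x : I) : (idealMul hI a x : A) = a * x := rfl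

theorem idealMul_coe_left (x y : I) : idealMul hI x y = x * y := rfl

theorem idealMul_mul_left (a b : A) (x : I) :
    idealMul hI (a * b) x = idealMul hI a (idealMul hI b x) :=
  Subtype.ext (mul_assoc a b (x : A))

theorem idealMul_mul_right (a : A) (x y : I) : idealMul hI a (x * y) = idealMul hI a x * y :=
  Subtype.ext (mul_assoc a (x : A) y).symm

theorem idealMul_mul_comm (a : A) (x y : I) : idealMul hI a x * y = x * idealMul hI a y :=
  Subtype.ext <| by
    simp only [NonUnitalSubalgebra.coe_mul, coe_idealMul, mul_left_comm, mul_assoc]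

/-- For a derivation `D : I → I*` and `x ∈ I`, the map `A → I*`, `a ↦ D(ax) - D(x)·a`. On `I` it
agrees with `a ↦ D(a)·x`, so it stands for the product with `x` of an extension of `D` to `A`. -/
noncomputable def derivationExtension (D : I →L[ℂ] I →L[ℂ] ℂ) (x : I) : A →L[ℂ] I →L[ℂ] ℂ :=
  D.comp ((idealMul hI).flip x) - (ContinuousLinearMap.compL ℂ I I ℂ (D x)).comp (idealMul hI)

variable {D : I →L[ℂ] I →L[ℂ] ℂ}

theorem derivationExtension_apply (x y : I) (a : A) :
    derivationExtension hI D x a y = D (idealMul hI a x) y - D x (idealMul hI a y) := rfl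

theorem derivationExtension_mul (x y : I) (a b : A) :
    derivationExtension hI D x (a * b) y =
      derivationExtension hI D (idealMul hI b x) a y +
        derivationExtension hI D x b (idealMul hI a y) := by
  simp only [derivationExtension_apply]
  rw [idealMul_mul_left, mul_comm a b, idealMul_mul_left]
  ring

theorem derivationExtension_coe (hD : IsDerivation D) (x y a : I) :
    derivationExtension hI D x a y = D a (x * y) := by
  rw [derivationExtension_apply, idealMul_coe_left, idealMul_coe_left, hD, mul_comm y a,
    add_sub_cancel_right]

theorem derivationExtension_mul_left (hD : IsDerivation D) (x v y : I) (a : A) :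
    derivationExtension hI D (x * v) a y = derivationExtension hI D x a (v * y) := by
  have hcomm : y * idealMul hI a x = idealMul hI a y * x := by
    rw [idealMul_mul_comm, mul_comm]
  simp only [derivationExtension_apply, idealMul_mul_right, hD _ v, hcomm,
    idealMul_mul_comm hI a v]
  ring

theorem derivationExtension_idealMul (hD : IsDerivation D) (x v w : I) (a b : A) :
    derivationExtension hI D (idealMul hI b x) a (v * w) =
      derivationExtension hI D x a (idealMul hI b (v * w)) := by
  rw [← derivationExtension_mul_left hI hD, idealMul_mul_comm,
    derivationExtension_mul_left hI hD, idealMul_mul_right]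

theorem isDerivation_derivationExtension (hD : IsDerivation D) (x v w : I) :
    IsDerivation ((derivationExtension hI D x).bilinearComp (.id ℂ A)
      ((idealMul hI).flip (v * w))) := fun a b c => by
  change derivationExtension hI D x (a * b) (idealMul hI c (v * w)) =
    derivationExtension hI D x a (idealMul hI (b * c) (v * w)) +
      derivationExtension hI D x b (idealMul hI (c * a) (v * w))
  rw [derivationExtension_mul, mul_comm c a, idealMul_mul_left, idealMul_mul_left,
    idealMul_mul_right hI c, derivationExtension_idealMul hI hD]

include hI in
theorem WeaklyAmenable.derivation_apply_mul_eq_zero (hA : WeaklyAmenable A) (hD : IsDerivation D)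
    (a x b v w : I) : D a (x * b * (v * w)) = 0 := by
  have hzero := hA.derivation_eq_zero (isDerivation_derivationExtension hI hD x v w)
  have hext : derivationExtension hI D x a (b * (v * w)) = 0 :=
    DFunLike.congr_fun (DFunLike.congr_fun hzero (a : A)) (b : A)
  rwa [derivationExtension_coe hI hD, ← mul_assoc] at hext

include hI in
theorem WeaklyAmenable.ideal_of_essential (hA : WeaklyAmenable A) (hess : Essential I) :
    WeaklyAmenable I := by
  intro D hD
  have hD_mul : ∀ a x y : I, D a (x * y) = 0 := fun a x y => by
    let β : I →L[ℂ] I →L[ℂ] ℂ :=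
      (ContinuousLinearMap.compL ℂ I I ℂ (D a)).comp (ContinuousLinearMap.mul ℂ I)
    have hβ : β = 0 := hess.bilin_eq_zero (hA.derivation_apply_mul_eq_zero hI hD a)
    exact DFunLike.congr_fun (DFunLike.congr_fun hβ x) y
  refine ⟨0, fun a b => ?_⟩
  rw [hess.eq_zero (hD_mul a), zero_apply, zero_apply, zero_apply, sub_zero]

end Ideal

theorem closedIdeal_weaklyAmenable_iff_general
    (A : Type*) [NonUnitalNormedCommRing A] [NormedSpace ℂ A]
    [IsScalarTower ℂ A A] [SMulCommClass ℂ A A]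
    (hA : WeaklyAmenable A)
    (I : NonUnitalSubalgebra ℂ A) (hideal : ∀ a : A, ∀ x ∈ I, a * x ∈ I) :
    (WeaklyAmenable I ↔ CyclicallyWeaklyAmenable I) ∧
    (WeaklyAmenable I ↔ Essential I) := by
  have weak_to_cyclic : WeaklyAmenable I → CyclicallyWeaklyAmenable I :=
    WeaklyAmenable.cyclicallyWeaklyAmenable
  have cyclic_to_essential : CyclicallyWeaklyAmenable I → Essential I :=
    CyclicallyWeaklyAmenable.essential
  have essential_to_weak : Essential I → WeaklyAmenable I := hA.ideal_of_essential hideal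
  exact ⟨⟨weak_to_cyclic, essential_to_weak ∘ cyclic_to_essential⟩,
    ⟨cyclic_to_essential ∘ weak_to_cyclic, essential_to_weak⟩⟩

/-- Let `A` be a commutative weakly amenable Banach algebra and `I` a closed ideal of
`A` (regarded as a Banach algebra in its own right). Then the following are
equivalent: (a) `I` is weakly amenable; (b) `I` is cyclically weakly amenable;
(c) `I` is essential. -/
theorem closedIdeal_weaklyAmenable_iff
    (A : Type*) [NonUnitalNormedCommRing A] [NormedSpace ℂ A]
    [IsScalarTower ℂ A A] [SMulCommClass ℂ A A] [CompleteSpace A]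
    (hA : WeaklyAmenable A)
    (I : NonUnitalSubalgebra ℂ A) (hclosed : IsClosed (I : Set A))
    (hideal : ∀ a : A, ∀ x ∈ I, a * x ∈ I) :
    (WeaklyAmenable I ↔ CyclicallyWeaklyAmenable I) ∧
    (WeaklyAmenable I ↔ Essential I) :=
  closedIdeal_weaklyAmenable_iff_general A hA I hideal
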